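/- arXiv:1909.04266 — 3 statements merged into one kernel-verified Lean document; each statement's English description precedes it below -/
import Mathlib

section
/- Suppose n = s and the cost matrix M ∈ ℝ_{≥0}^{n×n} satisfies the triangle inequality M_{ik} ≤ M_{ij} + M_{jk} for all indices i, j, k. Then the Wasserstein distance satisfies the triangle inequality: for all p, q, r ∈ Σ_n, W(p,q) ≤ W(p,r) + W(r,q). -/
open Finset

noncomputable section

/-- The simplex Σ_n: nonnegative vectors in ℝ^n summing to 1. -/
def simplex (n : ℕ) : Set (Fin n → ℝ) :=
  {p | (∀ i, 0 ≤ p i) ∧ ∑ i, p i = 1}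

/-- The transport polytope U(p,q): nonnegative n×s matrices with row sums p
and column sums q. -/
def transportPolytope {n s : ℕ} (p : Fin n → ℝ) (q : Fin s → ℝ) :
    Set (Matrix (Fin n) (Fin s) ℝ) :=
  {T | (∀ i j, 0 ≤ T i j) ∧ (∀ i, ∑ j, T i j = p i) ∧ (∀ j, ∑ i, T i j = q j)}

/-- Frobenius inner product ⟨T,M⟩ = Σ_{i,j} T_{ij} M_{ij}. -/
def frob {n s : ℕ} (T M : Matrix (Fin n) (Fin s) ℝ) : ℝ :=
  ∑ i, ∑ j, T i j * M i j

/-- The entropy h(T) = −Σ_{i,j} T_{ij} log T_{ij} (Real.log 0 = 0, so 0 log 0 = 0). -/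
def entropy {n s : ℕ} (T : Matrix (Fin n) (Fin s) ℝ) : ℝ :=
  -∑ i, ∑ j, T i j * Real.log (T i j)

/-- The Wasserstein distance W(p,q) = inf_{T ∈ U(p,q)} ⟨T,M⟩. -/
def W {n s : ℕ} (M : Matrix (Fin n) (Fin s) ℝ) (p : Fin n → ℝ) (q : Fin s → ℝ) : ℝ :=
  sInf ((fun T => frob T M) '' transportPolytope p q)

/-- The smoothed Wasserstein distance W_γ(p,q) = inf_{T ∈ U(p,q)} ⟨T,M⟩ − γ h(T). -/
def Wsmooth {n s : ℕ} (γ : ℝ) (M : Matrix (Fin n) (Fin s) ℝ)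
    (p : Fin n → ℝ) (q : Fin s → ℝ) : ℝ :=
  sInf ((fun T => frob T M - γ * entropy T) '' transportPolytope p q)

/-! Given transport plans `S` from `p` to `r` and `T` from `r` to `q`, the three-index plan
`S i j * T j k / r j` first moves mass along `S` and then along `T`, with the two steps independent
given the intermediate point `j`. Its outer marginal is a plan from `p` to `q`, and if the costs
satisfy `C i k ≤ A i j + B j k`, averaging this inequality against the three-index plan bounds the
`C`-cost of the outer marginal by the `A`-cost of `S` plus the `B`-cost of `T`. -/

section TransportPlans

variable {m n : ℕ} {p : Fin m → ℝ} {q : Fin n → ℝ} {T : Matrix (Fin m) (Fin n) ℝ}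

theorem le_left_of_mem_transportPolytope (hT : T ∈ transportPolytope p q) (i : Fin m) (j : Fin n) :
    T i j ≤ p i :=
  (single_le_sum (fun j _ => hT.1 i j) (mem_univ j)).trans_eq (hT.2.1 i)

theorem le_right_of_mem_transportPolytope (hT : T ∈ transportPolytope p q) (i : Fin m) (j : Fin n) :
    T i j ≤ q j :=
  (single_le_sum (fun i _ => hT.1 i j) (mem_univ i)).trans_eq (hT.2.2 j)

theorem left_nonneg_of_mem_transportPolytope (hT : T ∈ transportPolytope p q) (i : Fin m) :
    0 ≤ p i :=
  (sum_nonneg fun j _ => hT.1 i j).trans_eq (hT.2.1 i)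

theorem bddBelow_frob_image_transportPolytope (M : Matrix (Fin m) (Fin n) ℝ) (p : Fin m → ℝ)
    (q : Fin n → ℝ) : BddBelow ((fun T => frob T M) '' transportPolytope p q) := by
  refine ⟨∑ i, ∑ j, -(p i * |M i j|), ?_⟩
  rintro _ ⟨T, hT, rfl⟩
  refine sum_le_sum fun i _ => sum_le_sum fun j _ => ?_
  calc -(p i * |M i j|)
      ≤ -(T i j * |M i j|) := by gcongr; exact le_left_of_mem_transportPolytope hT i j
    _ = T i j * -|M i j| := by ring
    _ ≤ T i j * M i j := mul_le_mul_of_nonneg_left (neg_abs_le _) (hT.1 i j)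

theorem W_le_frob (M : Matrix (Fin m) (Fin n) ℝ) (hT : T ∈ transportPolytope p q) :
    W M p q ≤ frob T M :=
  csInf_le (bddBelow_frob_image_transportPolytope M p q) (Set.mem_image_of_mem _ hT)

theorem le_W {M : Matrix (Fin m) (Fin n) ℝ} {c : ℝ} (hne : (transportPolytope p q).Nonempty)
    (hc : ∀ T ∈ transportPolytope p q, c ≤ frob T M) : c ≤ W M p q :=
  le_csInf (hne.image _) (Set.forall_mem_image.2 hc)

end TransportPlans

section Gluing

variable {l m n : ℕ} {p : Fin l → ℝ} {r : Fin m → ℝ} {q : Fin n → ℝ}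
  {S : Matrix (Fin l) (Fin m) ℝ} {T : Matrix (Fin m) (Fin n) ℝ}

/-- The gluing of plans `S ∈ U(p,r)` and `T ∈ U(r,q)` along their common marginal `r`: the mass sent
from `i` to `k` through `j`. Where `r j = 0`, division by zero gives the correct value `0`. -/
def gluing (r : Fin m → ℝ) (S : Matrix (Fin l) (Fin m) ℝ) (T : Matrix (Fin m) (Fin n) ℝ)
    (i : Fin l) (j : Fin m) (k : Fin n) : ℝ :=
  S i j * T j k / r j

/-- The transport plan obtained by performing `S ∈ U(p,r)` and then `T ∈ U(r,q)`: the outer marginal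
of their gluing. -/
def composePlans (r : Fin m → ℝ) (S : Matrix (Fin l) (Fin m) ℝ) (T : Matrix (Fin m) (Fin n) ℝ) :
    Matrix (Fin l) (Fin n) ℝ :=
  fun i k => ∑ j, gluing r S T i j k

theorem gluing_nonneg (hS : S ∈ transportPolytope p r) (hT : T ∈ transportPolytope r q)
    (i : Fin l) (j : Fin m) (k : Fin n) : 0 ≤ gluing r S T i j k :=
  div_nonneg (mul_nonneg (hS.1 i j) (hT.1 j k)) (left_nonneg_of_mem_transportPolytope hT j)

theorem sum_gluing_right (hS : S ∈ transportPolytope p r) (hT : T ∈ transportPolytope r q)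
    (i : Fin l) (j : Fin m) : ∑ k, gluing r S T i j k = S i j := by
  have eq_zero_of_marginal (hj : r j = 0) : S i j = 0 :=
    le_antisymm ((le_right_of_mem_transportPolytope hS i j).trans_eq hj) (hS.1 i j)
  simp only [gluing]
  rw [← sum_div, ← mul_sum, hT.2.1 j, mul_div_cancel_of_imp eq_zero_of_marginal]

theorem sum_gluing_left (hS : S ∈ transportPolytope p r) (hT : T ∈ transportPolytope r q)
    (j : Fin m) (k : Fin n) : ∑ i, gluing r S T i j k = T j k := by
  have eq_zero_of_marginal (hj : r j = 0) : T j k = 0 :=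
    le_antisymm ((le_left_of_mem_transportPolytope hT j k).trans_eq hj) (hT.1 j k)
  simp only [gluing]
  rw [← sum_div, ← sum_mul, hS.2.2 j, mul_div_cancel_left_of_imp eq_zero_of_marginal]

theorem composePlans_mem_transportPolytope (hS : S ∈ transportPolytope p r)
    (hT : T ∈ transportPolytope r q) : composePlans r S T ∈ transportPolytope p q := by
  refine ⟨fun i k => sum_nonneg fun j _ => gluing_nonneg hS hT i j k, fun i => ?_, fun k => ?_⟩
  · calc ∑ k, composePlans r S T i k
        = ∑ j, ∑ k, gluing r S T i j k := sum_comm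
      _ = ∑ j, S i j := by simp only [sum_gluing_right hS hT]
      _ = p i := hS.2.1 i
  · calc ∑ i, composePlans r S T i k
        = ∑ j, ∑ i, gluing r S T i j k := sum_comm
      _ = ∑ j, T j k := by simp only [sum_gluing_left hS hT]
      _ = q k := hT.2.2 k

theorem frob_eq_sum_gluing_left (hS : S ∈ transportPolytope p r) (hT : T ∈ transportPolytope r q)
    (A : Matrix (Fin l) (Fin m) ℝ) :
    frob S A = ∑ i, ∑ j, ∑ k, gluing r S T i j k * A i j := by
  simp only [frob, ← sum_mul, sum_gluing_right hS hT]

theorem frob_eq_sum_gluing_right (hS : S ∈ transportPolytope p r) (hT : T ∈ transportPolytope r q)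
    (B : Matrix (Fin m) (Fin n) ℝ) :
    frob T B = ∑ i, ∑ j, ∑ k, gluing r S T i j k * B j k := by
  calc frob T B = ∑ j, ∑ k, ∑ i, gluing r S T i j k * B j k := by
        simp only [frob, ← sum_mul, sum_gluing_left hS hT]
    _ = ∑ j, ∑ i, ∑ k, gluing r S T i j k * B j k := sum_congr rfl fun _ _ => sum_comm
    _ = ∑ i, ∑ j, ∑ k, gluing r S T i j k * B j k := sum_comm

theorem frob_composePlans (r : Fin m → ℝ) (S : Matrix (Fin l) (Fin m) ℝ)
    (T : Matrix (Fin m) (Fin n) ℝ) (C : Matrix (Fin l) (Fin n) ℝ) :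
    frob (composePlans r S T) C = ∑ i, ∑ j, ∑ k, gluing r S T i j k * C i k := by
  simp only [frob, composePlans, sum_mul]
  exact sum_congr rfl fun _ _ => sum_comm

theorem frob_composePlans_le {A : Matrix (Fin l) (Fin m) ℝ} {B : Matrix (Fin m) (Fin n) ℝ}
    {C : Matrix (Fin l) (Fin n) ℝ} (hC : ∀ i j k, C i k ≤ A i j + B j k)
    (hS : S ∈ transportPolytope p r) (hT : T ∈ transportPolytope r q) :
    frob (composePlans r S T) C ≤ frob S A + frob T B := by
  calc frob (composePlans r S T) C
      = ∑ i, ∑ j, ∑ k, gluing r S T i j k * C i k := frob_composePlans r S T C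
    _ ≤ ∑ i, ∑ j, ∑ k, gluing r S T i j k * (A i j + B j k) := by
        gcongr with i _ j _ k _
        · exact gluing_nonneg hS hT i j k
        · exact hC i j k
    _ = frob S A + frob T B := by
        simp only [mul_add, sum_add_distrib, frob_eq_sum_gluing_left hS hT A,
          frob_eq_sum_gluing_right hS hT B]

end Gluing

theorem transportPolytope_nonempty {m n : ℕ} {p : Fin m → ℝ} {q : Fin n → ℝ} (hp : ∀ i, 0 ≤ p i)
    (hq : ∀ j, 0 ≤ q j) (hpq : ∑ i, p i = ∑ j, q j) : (transportPolytope p q).Nonempty := by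
  -- Gather all the mass at a single point, then distribute it.
  let r : Fin 1 → ℝ := fun _ => ∑ i, p i
  have gather : (fun i _ => p i) ∈ transportPolytope p r :=
    ⟨fun i _ => hp i, fun i => by simp, fun _ => rfl⟩
  have distribute : (fun _ j => q j) ∈ transportPolytope r q :=
    ⟨fun _ j => hq j, fun _ => hpq.symm, fun j => by simp⟩
  exact ⟨_, composePlans_mem_transportPolytope gather distribute⟩

theorem transportPolytope_nonempty_of_mem_simplex {m n : ℕ} {p : Fin m → ℝ} {q : Fin n → ℝ}
    (hp : p ∈ simplex m) (hq : q ∈ simplex n) : (transportPolytope p q).Nonempty :=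
  transportPolytope_nonempty hp.1 hq.1 (hp.2.trans hq.2.symm)

theorem wasserstein_triangle_general {l m n : ℕ} {A : Matrix (Fin l) (Fin m) ℝ}
    {B : Matrix (Fin m) (Fin n) ℝ} {C : Matrix (Fin l) (Fin n) ℝ}
    (hC : ∀ i j k, C i k ≤ A i j + B j k) {p : Fin l → ℝ} {q : Fin n → ℝ} {r : Fin m → ℝ}
    (hpr : (transportPolytope p r).Nonempty) (hrq : (transportPolytope r q).Nonempty) :
    W C p q ≤ W A p r + W B r q := by
  have le_frob_add_frob : ∀ S ∈ transportPolytope p r, ∀ T ∈ transportPolytope r q,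
      W C p q ≤ frob S A + frob T B := fun S hS T hT =>
    (W_le_frob C (composePlans_mem_transportPolytope hS hT)).trans (frob_composePlans_le hC hS hT)
  have le_frob_add_W : ∀ S ∈ transportPolytope p r, W C p q ≤ frob S A + W B r q := fun S hS =>
    sub_le_iff_le_add'.1 (le_W hrq fun T hT => sub_le_iff_le_add'.2 (le_frob_add_frob S hS T hT))
  exact sub_le_iff_le_add.1 (le_W hpr fun S hS => sub_le_iff_le_add.2 (le_frob_add_W S hS))

/-- if the cost matrix satisfies the triangle inequality, then so does W. -/
theorem wasserstein_triangle
    (n : ℕ) (hn : 0 < n)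
    (M : Matrix (Fin n) (Fin n) ℝ) (hM : ∀ i j, 0 ≤ M i j)
    (htri : ∀ i j k, M i k ≤ M i j + M j k)
    (p q r : Fin n → ℝ) (hp : p ∈ simplex n) (hq : q ∈ simplex n) (hr : r ∈ simplex n) :
    W M p q ≤ W M p r + W M r q :=
  wasserstein_triangle_general htri (transportPolytope_nonempty_of_mem_simplex hp hr)
    (transportPolytope_nonempty_of_mem_simplex hr hq)
end
end

section
/- For every γ > 0, every cost matrix M ∈ ℝ_{≥0}^{n×s} and every p ∈ Σ_n, the Wasserstein filtering problem min_{q ∈ Σ_s} W_γ(p,q) admits a minimizer, and this minimizer is unique. -/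
open Finset

noncomputable section

/-!
Choosing `q` and then an optimal plan in `U(p, q)` amounts to choosing a single plan with row
marginal `p`. Such plans form a compact convex set, on which the smoothed cost is continuous and,
because of the entropy, strictly convex; it therefore has exactly one minimizer. Every minimizer
`q` of `W_γ(p, ·)` is the column marginal of an optimal plan in `U(p, q)`, which must be that one.
-/

section InfimalProjection

variable {X Y β : Type*} [ConditionallyCompleteLinearOrder β]

/-- The infimal projection of `f` along `π`: the function sending `y` to the infimum of `f` over
the points of `K` lying above `y`. It carries the junk value `sInf ∅` off `π '' K`. -/
def infimalProjection (f : X → β) (K : Set X) (π : X → Y) (y : Y) : β :=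
  sInf (f '' (K ∩ π ⁻¹' {y}))

variable [TopologicalSpace X] [TopologicalSpace Y] [T1Space Y] [TopologicalSpace β]
  [ClosedIicTopology β] {f : X → β} {K : Set X} {π : X → Y}

theorem isLeast_infimalProjection (hK : IsCompact K) (hf : ContinuousOn f K) (hπ : Continuous π)
    {x : X} (hx : x ∈ K) :
    IsLeast (f '' (K ∩ π ⁻¹' {π x})) (infimalProjection f K π (π x)) := by
  have hfiber : IsCompact (K ∩ π ⁻¹' {π x}) := hK.inter_right (isClosed_singleton.preimage hπ)
  exact (hfiber.image_of_continuousOn (hf.mono Set.inter_subset_left)).isLeast_sInf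
    ⟨f x, x, ⟨hx, rfl⟩, rfl⟩

theorem existsUnique_isMinOn_infimalProjection (hK : IsCompact K) (hf : ContinuousOn f K)
    (hπ : Continuous π) (h : ∃! x, x ∈ K ∧ IsMinOn f K x) :
    ∃! y, y ∈ π '' K ∧ IsMinOn (infimalProjection f K π) (π '' K) y := by
  obtain ⟨x, ⟨hxK, hx⟩, hunique⟩ := h
  have attained : ∀ z ∈ K, ∃ w ∈ K, π w = π z ∧ f w = infimalProjection f K π (π z) := by
    intro z hz
    obtain ⟨w, ⟨hwK, hwz⟩, hw⟩ := (isLeast_infimalProjection hK hf hπ hz).1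
    exact ⟨w, hwK, hwz, hw⟩
  have le_min : infimalProjection f K π (π x) ≤ f x :=
    (isLeast_infimalProjection hK hf hπ hxK).2 ⟨x, ⟨hxK, rfl⟩, rfl⟩
  refine ⟨π x, ⟨Set.mem_image_of_mem π hxK, ?_⟩, ?_⟩
  · rintro _ ⟨z, hz, rfl⟩
    obtain ⟨w, hwK, -, hw⟩ := attained z hz
    exact le_min.trans ((hx hwK).trans_eq hw)
  · rintro _ ⟨⟨z, hz, rfl⟩, hmin⟩
    obtain ⟨w, hwK, hwz, hw⟩ := attained z hz
    have hwx : f w ≤ f x := hw.trans_le ((hmin (Set.mem_image_of_mem π hxK)).trans le_min)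
    rw [← hwz, hunique w ⟨hwK, fun v hv ↦ hwx.trans (hx hv)⟩]

end InfimalProjection

section StrictConvexity

theorem existsUnique_isMinOn_of_strictConvexOn {𝕜 E β : Type*}
    [Field 𝕜] [LinearOrder 𝕜] [IsStrictOrderedRing 𝕜]
    [AddCommMonoid E] [SMul 𝕜 E] [TopologicalSpace E]
    [AddCommMonoid β] [LinearOrder β] [IsOrderedAddMonoid β] [Module 𝕜 β] [PosSMulMono 𝕜 β]
    [TopologicalSpace β] [ClosedIicTopology β] {K : Set E} {f : E → β}
    (hK : IsCompact K) (hne : K.Nonempty) (hcont : ContinuousOn f K)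
    (hconv : StrictConvexOn 𝕜 K f) :
    ∃! x, x ∈ K ∧ IsMinOn f K x := by
  obtain ⟨x, hxK, hx⟩ := hK.exists_isMinOn hne hcont
  exact ⟨x, ⟨hxK, hx⟩, fun y hy ↦ hconv.eq_of_isMinOn hy.2 hx hy.1 hxK⟩

theorem strictConcaveOn_const_smul {𝕜 E β : Type*} [CommSemiring 𝕜] [PartialOrder 𝕜]
    [AddCommMonoid E] [SMul 𝕜 E] [AddCommMonoid β] [PartialOrder β] [Module 𝕜 β]
    [PosSMulStrictMono 𝕜 β] {K : Set E} {f : E → β} {c : 𝕜} (hc : 0 < c)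
    (hf : StrictConcaveOn 𝕜 K f) : StrictConcaveOn 𝕜 K fun x ↦ c • f x := by
  refine ⟨hf.1, fun x hx y hy hxy a b ha hb hab ↦ ?_⟩
  calc a • c • f x + b • c • f y = c • (a • f x + b • f y) := by
        rw [smul_add, smul_comm c a, smul_comm c b]
    _ < c • f (a • x + b • y) := smul_lt_smul_of_pos_left (hf.2 hx hy hxy ha hb hab) hc

theorem strictConcaveOn_sum_apply {𝕜 ι β : Type*} [Semiring 𝕜] [PartialOrder 𝕜] [Fintype ι]
    {E : ι → Type*} [∀ i, AddCommMonoid (E i)] [∀ i, Module 𝕜 (E i)]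
    [AddCommMonoid β] [PartialOrder β] [IsOrderedCancelAddMonoid β] [Module 𝕜 β]
    {s : ∀ i, Set (E i)} {f : ∀ i, E i → β} (hf : ∀ i, StrictConcaveOn 𝕜 (s i) (f i)) :
    StrictConcaveOn 𝕜 (Set.univ.pi s) fun x ↦ ∑ i, f i (x i) := by
  refine ⟨convex_pi fun i _ ↦ (hf i).1, fun x hx y hy hxy a b ha hb hab ↦ ?_⟩
  obtain ⟨i, hi⟩ := Function.ne_iff.mp hxy
  simp only [Finset.smul_sum, ← Finset.sum_add_distrib]
  refine Finset.sum_lt_sum (fun j _ ↦ ?_) ⟨i, mem_univ i, ?_⟩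
  · exact (hf j).concaveOn.2 (hx j trivial) (hy j trivial) ha.le hb.le hab
  · exact (hf i).2 (hx i trivial) (hy i trivial) hi ha hb hab

end StrictConvexity

section RowPolytope

variable {m : Type*} (κ : Type*) [Fintype κ]

/-- The nonnegative matrices with row sums `p`, that is, the union of the transport polytopes
`U(p, q)` over all column marginals `q`. -/
def rowPolytope (p : m → ℝ) : Set (Matrix m κ ℝ) :=
  {T | (∀ i j, 0 ≤ T i j) ∧ ∀ i, ∑ j, T i j = p i}

variable {κ}

theorem convex_rowPolytope (p : m → ℝ) : Convex ℝ (rowPolytope κ p) := by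
  rintro A ⟨hA, hAp⟩ B ⟨hB, hBp⟩ a b ha hb hab
  refine ⟨fun i j ↦ add_nonneg (mul_nonneg ha (hA i j)) (mul_nonneg hb (hB i j)), fun i ↦ ?_⟩
  simp only [Matrix.add_apply, Matrix.smul_apply, smul_eq_mul, Finset.sum_add_distrib,
    ← Finset.mul_sum, hAp, hBp, ← add_mul, hab, one_mul]

theorem isClosed_rowPolytope (p : m → ℝ) : IsClosed (rowPolytope κ p) := by
  simp only [rowPolytope, Set.ofPred_and, Set.ofPred_forall]
  refine .inter (isClosed_iInter fun i ↦ isClosed_iInter fun j ↦ ?_) (isClosed_iInter fun i ↦ ?_)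
  · exact isClosed_le continuous_const (by fun_prop)
  · exact isClosed_eq (by fun_prop) continuous_const

theorem isCompact_rowPolytope (p : m → ℝ) : IsCompact (rowPolytope κ p) := by
  have hbox : IsCompact (Set.univ.pi fun i ↦ Set.univ.pi fun _ : κ ↦ Set.Icc 0 (p i)) :=
    isCompact_univ_pi fun i ↦ isCompact_univ_pi fun _ ↦ isCompact_Icc
  refine hbox.of_isClosed_subset (isClosed_rowPolytope p) ?_
  rintro T ⟨hT, hTp⟩ i - j -
  exact ⟨hT i j, hTp i ▸ single_le_sum (fun k _ ↦ hT i k) (mem_univ j)⟩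

end RowPolytope

section ColumnMarginal

/-- The column marginal of a transport plan. -/
def colMarginal {m κ : Type*} [Fintype m] (T : Matrix m κ ℝ) : κ → ℝ :=
  fun j ↦ ∑ i, T i j

theorem continuous_colMarginal {m κ : Type*} [Fintype m] :
    Continuous (colMarginal : Matrix m κ ℝ → κ → ℝ) := by
  unfold colMarginal
  fun_prop

variable {n s : ℕ} {p : Fin n → ℝ}

theorem transportPolytope_eq_inter_preimage (p : Fin n → ℝ) (q : Fin s → ℝ) :
    transportPolytope p q = rowPolytope (Fin s) p ∩ colMarginal ⁻¹' {q} := by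
  ext T
  simp only [transportPolytope, rowPolytope, colMarginal, Set.mem_ofPred_eq, Set.mem_inter_iff,
    Set.mem_preimage, Set.mem_singleton_iff, funext_iff, and_assoc]

theorem vecMulVec_mem_transportPolytope {q : Fin s → ℝ} (hp : p ∈ simplex n)
    (hq : q ∈ simplex s) : Matrix.vecMulVec p q ∈ transportPolytope p q := by
  refine ⟨fun i j ↦ mul_nonneg (hp.1 i) (hq.1 j), fun i ↦ ?_, fun j ↦ ?_⟩
  · simp only [Matrix.vecMulVec_apply, ← Finset.mul_sum, hq.2, mul_one]
  · simp only [Matrix.vecMulVec_apply, ← Finset.sum_mul, hp.2, one_mul]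

theorem colMarginal_mem_simplex (hp : p ∈ simplex n) {T : Matrix (Fin n) (Fin s) ℝ}
    (hT : T ∈ rowPolytope (Fin s) p) : colMarginal T ∈ simplex s := by
  refine ⟨fun j ↦ sum_nonneg fun i _ ↦ hT.1 i j, ?_⟩
  calc ∑ j, ∑ i, T i j = ∑ i, ∑ j, T i j := Finset.sum_comm
    _ = ∑ i, p i := by simp only [hT.2]
    _ = 1 := hp.2

theorem colMarginal_image_rowPolytope (hp : p ∈ simplex n) :
    colMarginal '' rowPolytope (Fin s) p = simplex s := by
  refine Set.Subset.antisymm ?_ fun q hq ↦ ?_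
  · rintro _ ⟨T, hT, rfl⟩
    exact colMarginal_mem_simplex hp hT
  · have hmem := vecMulVec_mem_transportPolytope hp hq
    rw [transportPolytope_eq_inter_preimage] at hmem
    exact ⟨_, hmem⟩

theorem simplex_nonempty (hs : 0 < s) : (simplex s).Nonempty :=
  ⟨Pi.single ⟨0, hs⟩ 1, single_mem_stdSimplex ℝ _⟩

end ColumnMarginal

section SmoothedCost

variable {n s : ℕ}

theorem entropy_eq_sum_negMulLog (T : Matrix (Fin n) (Fin s) ℝ) :
    entropy T = ∑ i, ∑ j, Real.negMulLog (T i j) := by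
  simp only [entropy, Real.negMulLog, neg_mul, Finset.sum_neg_distrib]

theorem continuous_entropy : Continuous (entropy : Matrix (Fin n) (Fin s) ℝ → ℝ) := by
  simp only [funext entropy_eq_sum_negMulLog]
  fun_prop

theorem strictConcaveOn_entropy :
    StrictConcaveOn ℝ {T : Matrix (Fin n) (Fin s) ℝ | ∀ i j, 0 ≤ T i j} entropy := by
  have horthant : {T : Matrix (Fin n) (Fin s) ℝ | ∀ i j, 0 ≤ T i j} =
      Set.univ.pi fun _ ↦ Set.univ.pi fun _ ↦ Set.Ici 0 := by
    ext T
    exact ⟨fun hT i _ j _ ↦ hT i j, fun hT i j ↦ hT i trivial j trivial⟩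
  rw [horthant, funext entropy_eq_sum_negMulLog]
  exact strictConcaveOn_sum_apply fun _ ↦ strictConcaveOn_sum_apply fun _ ↦
    Real.strictConcaveOn_negMulLog

theorem isLinearMap_frob (M : Matrix (Fin n) (Fin s) ℝ) : IsLinearMap ℝ fun T ↦ frob T M where
  map_add A B := by simp only [frob, Matrix.add_apply, add_mul, Finset.sum_add_distrib]
  map_smul c A := by
    simp only [frob, Matrix.smul_apply, smul_eq_mul, mul_assoc, ← Finset.mul_sum]

/-- The objective `⟨T, M⟩ - γ h(T)` whose minimum over `U(p, q)` is `W_γ(p, q)`. -/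
def smoothedCost (γ : ℝ) (M T : Matrix (Fin n) (Fin s) ℝ) : ℝ :=
  frob T M - γ * entropy T

theorem continuous_smoothedCost (γ : ℝ) (M : Matrix (Fin n) (Fin s) ℝ) :
    Continuous (smoothedCost γ M) := by
  have hfrob : Continuous fun T ↦ frob T M := by
    unfold frob
    fun_prop
  exact hfrob.sub (continuous_entropy.const_mul γ)

theorem strictConvexOn_smoothedCost {γ : ℝ} (hγ : 0 < γ) (M : Matrix (Fin n) (Fin s) ℝ) :
    StrictConvexOn ℝ {T | ∀ i j, 0 ≤ T i j} (smoothedCost γ M) := by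
  have hfrob : ConvexOn ℝ {T | ∀ i j, 0 ≤ T i j} fun T ↦ frob T M :=
    (isLinearMap_frob M).mk'.convexOn strictConcaveOn_entropy.1
  exact hfrob.sub_strictConcaveOn (strictConcaveOn_const_smul hγ strictConcaveOn_entropy)

theorem Wsmooth_eq_infimalProjection (γ : ℝ) (M : Matrix (Fin n) (Fin s) ℝ) (p : Fin n → ℝ) :
    Wsmooth γ M p = infimalProjection (smoothedCost γ M) (rowPolytope (Fin s) p) colMarginal := by
  funext q
  simp only [Wsmooth, infimalProjection, ← transportPolytope_eq_inter_preimage]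
  rfl

end SmoothedCost

theorem wasserstein_filtering_existsUnique_minimizer_general {n s : ℕ} (hs : 0 < s) {γ : ℝ}
    (hγ : 0 < γ) (M : Matrix (Fin n) (Fin s) ℝ) {p : Fin n → ℝ} (hp : p ∈ simplex n) :
    ∃! q : Fin s → ℝ,
      q ∈ simplex s ∧ ∀ q' ∈ simplex s, Wsmooth γ M p q ≤ Wsmooth γ M p q' := by
  have himage : colMarginal '' rowPolytope (Fin s) p = simplex s := colMarginal_image_rowPolytope hp
  have hnonempty : (rowPolytope (Fin s) p).Nonempty :=
    Set.image_nonempty.mp (himage ▸ simplex_nonempty hs)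
  have hcompact : IsCompact (rowPolytope (Fin s) p) := isCompact_rowPolytope p
  have hcont : ContinuousOn (smoothedCost γ M) (rowPolytope (Fin s) p) :=
    (continuous_smoothedCost γ M).continuousOn
  have hconv : StrictConvexOn ℝ (rowPolytope (Fin s) p) (smoothedCost γ M) :=
    (strictConvexOn_smoothedCost hγ M).subset (fun _ hT ↦ hT.1) (convex_rowPolytope p)
  have hplan := existsUnique_isMinOn_of_strictConvexOn hcompact hnonempty hcont hconv
  have hmarginal :=
    existsUnique_isMinOn_infimalProjection hcompact hcont continuous_colMarginal hplan
  rwa [himage, ← Wsmooth_eq_infimalProjection] at hmarginal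

/-- for γ > 0, the Wasserstein filtering problem min_{q ∈ Σ_s} W_γ(p,q)
admits a unique minimizer. -/
theorem wasserstein_filtering_existsUnique_minimizer
    (n s : ℕ) (hn : 0 < n) (hs : 0 < s)
    (γ : ℝ) (hγ : 0 < γ)
    (M : Matrix (Fin n) (Fin s) ℝ) (hM : ∀ i j, 0 ≤ M i j)
    (p : Fin n → ℝ) (hp : p ∈ simplex n) :
    ∃! q : Fin s → ℝ,
      q ∈ simplex s ∧ ∀ q' ∈ simplex s, Wsmooth γ M p q ≤ Wsmooth γ M p q' :=
  wasserstein_filtering_existsUnique_minimizer_general hs hγ M hp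
end
end

section
/- Let γ > 0, let M ∈ ℝ_{≥0}^{n×s}, and let p ∈ Σ_n and q ∈ Σ_s both have strictly positive entries. Let K = e^{−M/γ} entrywise. Then the unique minimizer T* of ⟨T,M⟩ − γ h(T) over U(p,q) has the scaling form T*_{ij} = u_i K_{ij} v_j for some strictly positive vectors u ∈ ℝ^n and v ∈ ℝ^s. -/
open Finset

noncomputable section

/-- K = e^{−M/γ}, entrywise. -/
def Kmat {n s : ℕ} (γ : ℝ) (M : Matrix (Fin n) (Fin s) ℝ) : Matrix (Fin n) (Fin s) ℝ :=
  fun i j => Real.exp (-M i j / γ)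

/-- Legendre–Fenchel conjugate H_p*(g) = sup_{q ∈ Σ_s} (⟨g,q⟩ − W_γ(p,q)). -/
def Hstar {n s : ℕ} (γ : ℝ) (M : Matrix (Fin n) (Fin s) ℝ)
    (p : Fin n → ℝ) (g : Fin s → ℝ) : ℝ :=
  sSup ((fun q => (∑ j, g j * q j) - Wsmooth γ M p q) '' simplex s)

/-- The gradient formula ∇H_p*(g) = α ⊙ Kᵀ (p ⊘ Kα), where α = e^{g/γ} entrywise. -/
def HstarGrad {n s : ℕ} (γ : ℝ) (M : Matrix (Fin n) (Fin s) ℝ)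
    (p : Fin n → ℝ) (g : Fin s → ℝ) : Fin s → ℝ :=
  fun j => Real.exp (g j / γ) *
    Matrix.mulVec (Kmat γ M).transpose
      (fun i => p i / Matrix.mulVec (Kmat γ M) (fun j' => Real.exp (g j' / γ)) i) j

/-!
The regularized cost is continuous and strictly convex on the compact convex set `U(p, q)`, so it
has exactly one minimizer `T`. All entries of `T` are positive: `x log x` has slope `-∞` at `0`, so
if an entry vanished, moving towards a plan with positive entries would lower the cost. Hence the
gradient `M i j + γ (log (T i j) + 1)` is orthogonal to every matrix with zero row and column sums.
Testing it against the exchanges `(e i - e i') (e j - e j')ᵀ` shows that it has the form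
`a i + b j`, and solving for `T i j` gives the scaling form.
-/

section EntropicTransport

open Matrix Filter Topology

section CellCost

variable {γ m x : ℝ}

/-- The contribution `x m + γ x log x` of a single entry `x` to the regularized transport cost,
where `m` is the corresponding entry of the cost matrix. -/
def cellCost (γ m x : ℝ) : ℝ := x * m + γ * (x * Real.log x)

lemma cellCost_mul (γ m t x : ℝ) :
    cellCost γ m (t * x) = t * cellCost γ m x + γ * (t * x) * Real.log t := by
  rcases eq_or_ne t 0 with rfl | ht
  · simp [cellCost]
  rcases eq_or_ne x 0 with rfl | hx
  · simp [cellCost]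
  rw [cellCost, cellCost, Real.log_mul ht hx]
  ring

lemma continuous_cellCost (γ m : ℝ) : Continuous (cellCost γ m) :=
  (continuous_mul_const m).add (Real.continuous_mul_log.const_mul γ)

lemma strictConvexOn_cellCost (hγ : 0 < γ) (m : ℝ) :
    StrictConvexOn ℝ (Set.Ici 0) (cellCost γ m) := by
  refine ⟨convex_Ici 0, fun x hx y hy hxy a b ha hb hab ↦ ?_⟩
  have hlog := mul_lt_mul_of_pos_left (Real.strictConvexOn_mul_log.2 hx hy hxy ha hb hab) hγ
  simp only [cellCost, smul_eq_mul] at hlog ⊢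
  linarith

lemma hasDerivAt_cellCost (γ m : ℝ) (hx : x ≠ 0) :
    HasDerivAt (cellCost γ m) (m + γ * (Real.log x + 1)) x :=
  (hasDerivAt_mul_const m).add ((Real.hasDerivAt_mul_log hx).const_mul γ)

end CellCost

section Separable

lemma strictConvexOn_univ_pi_sum {ι : Type*} [Fintype ι] {E : ι → Type*}
    [∀ i, AddCommGroup (E i)] [∀ i, Module ℝ (E i)] {s : ∀ i, Set (E i)} {f : ∀ i, E i → ℝ}
    (hf : ∀ i, StrictConvexOn ℝ (s i) (f i)) :
    StrictConvexOn ℝ (Set.univ.pi s) fun x ↦ ∑ i, f i (x i) := by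
  refine ⟨convex_pi fun i _ ↦ (hf i).1, fun x hx y hy hxy a b ha hb hab ↦ ?_⟩
  obtain ⟨k, hk⟩ := Function.ne_iff.1 hxy
  simp only [smul_eq_mul, mul_sum, ← sum_add_distrib]
  exact sum_lt_sum
    (fun i _ ↦ (hf i).convexOn.2 (hx i trivial) (hy i trivial) ha.le hb.le hab)
    ⟨k, mem_univ k, (hf k).2 (hx k trivial) (hy k trivial) hk ha hb hab⟩

lemma exists_eq_add_of_exchange {ι κ G : Type*} [AddCommGroup G] {A : ι → κ → G}
    (hA : ∀ i i' j j', A i j + A i' j' = A i j' + A i' j) :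
    ∃ (a : ι → G) (b : κ → G), ∀ i j, A i j = a i + b j := by
  rcases isEmpty_or_nonempty ι with _ | ⟨⟨i₀⟩⟩
  · exact ⟨0, 0, isEmptyElim⟩
  rcases isEmpty_or_nonempty κ with _ | ⟨⟨j₀⟩⟩
  · exact ⟨0, 0, fun _ ↦ isEmptyElim⟩
  refine ⟨fun i ↦ A i j₀, fun j ↦ A i₀ j - A i₀ j₀, fun i j ↦ ?_⟩
  rw [← add_sub_assoc, ← hA, add_sub_cancel_right]

end Separable

variable {n s : ℕ} {p : Fin n → ℝ} {q : Fin s → ℝ}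

section TransportPolytope

lemma convex_transportPolytope (p : Fin n → ℝ) (q : Fin s → ℝ) :
    Convex ℝ (transportPolytope p q) := by
  rintro T ⟨hT, hTrow, hTcol⟩ P ⟨hP, hProw, hPcol⟩ a b ha hb hab
  refine ⟨fun i j ↦ add_nonneg (mul_nonneg ha (hT i j)) (mul_nonneg hb (hP i j)),
    fun i ↦ ?_, fun j ↦ ?_⟩
  · simp only [Matrix.add_apply, Matrix.smul_apply, smul_eq_mul, sum_add_distrib, ← mul_sum, hTrow,
      hProw, ← add_mul, hab, one_mul]
  · simp only [Matrix.add_apply, Matrix.smul_apply, smul_eq_mul, sum_add_distrib, ← mul_sum, hTcol,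
      hPcol, ← add_mul, hab, one_mul]

lemma isClosed_transportPolytope (p : Fin n → ℝ) (q : Fin s → ℝ) :
    IsClosed (transportPolytope p q) := by
  simp only [transportPolytope, Set.ofPred_and, Set.ofPred_forall]
  refine .inter (isClosed_iInter fun i ↦ isClosed_iInter fun j ↦ ?_)
    (.inter (isClosed_iInter fun i ↦ ?_) (isClosed_iInter fun j ↦ ?_))
  · exact isClosed_le (by fun_prop) (by fun_prop)
  · exact isClosed_eq (by fun_prop) (by fun_prop)
  · exact isClosed_eq (by fun_prop) (by fun_prop)

lemma isCompact_transportPolytope (p : Fin n → ℝ) (q : Fin s → ℝ) :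
    IsCompact (transportPolytope p q) := by
  have hbox : IsCompact (Set.univ.pi fun i ↦ Set.univ.pi fun _ : Fin s ↦ Set.Icc 0 (p i)) :=
    isCompact_univ_pi fun _ ↦ isCompact_univ_pi fun _ ↦ isCompact_Icc
  refine hbox.of_isClosed_subset (isClosed_transportPolytope p q) ?_
  rintro T ⟨hT, hTrow, -⟩ i - j -
  exact ⟨hT i j, (single_le_sum (fun j _ ↦ hT i j) (mem_univ j)).trans_eq (hTrow i)⟩

lemma exists_pos_mem_transportPolytope (hp : ∀ i, 0 < p i) (hq : ∀ j, 0 < q j)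
    (hpq : ∑ i, p i = ∑ j, q j) : ∃ P ∈ transportPolytope p q, ∀ i j, 0 < P i j := by
  have hmass (i : Fin n) : 0 < ∑ i, p i := sum_pos (fun i _ ↦ hp i) ⟨i, mem_univ i⟩
  have hmass' (j : Fin s) : 0 < ∑ j, q j := sum_pos (fun j _ ↦ hq j) ⟨j, mem_univ j⟩
  have hpos (i j) : 0 < p i * q j / ∑ i, p i := div_pos (mul_pos (hp i) (hq j)) (hmass i)
  refine ⟨fun i j ↦ p i * q j / ∑ i, p i, ⟨fun i j ↦ (hpos i j).le, fun i ↦ ?_, fun j ↦ ?_⟩, hpos⟩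
  · rw [← sum_div, ← mul_sum, ← hpq, mul_div_cancel_right₀ _ (hmass i).ne']
  · rw [← sum_div, ← sum_mul, hpq, mul_div_cancel_left₀ _ (hmass' j).ne']

lemma add_mem_transportPolytope {T D : Matrix (Fin n) (Fin s) ℝ} (hT : T ∈ transportPolytope p q)
    (hrow : ∀ i, ∑ j, D i j = 0) (hcol : ∀ j, ∑ i, D i j = 0)
    (hnonneg : ∀ i j, 0 ≤ (T + D) i j) : T + D ∈ transportPolytope p q := by
  refine ⟨hnonneg, fun i ↦ ?_, fun j ↦ ?_⟩
  · simp only [Matrix.add_apply, sum_add_distrib, hT.2.1, hrow, add_zero]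
  · simp only [Matrix.add_apply, sum_add_distrib, hT.2.2, hcol, add_zero]

end TransportPolytope

section RegularizedCost

variable {γ : ℝ} {M T P : Matrix (Fin n) (Fin s) ℝ}

/-- The entropy-regularized transport cost `⟨T, M⟩ - γ h(T)`. -/
def regularizedCost (γ : ℝ) (M T : Matrix (Fin n) (Fin s) ℝ) : ℝ :=
  frob T M - γ * entropy T

lemma regularizedCost_eq_sum (γ : ℝ) (M T : Matrix (Fin n) (Fin s) ℝ) :
    regularizedCost γ M T = ∑ i, ∑ j, cellCost γ (M i j) (T i j) := by
  simp only [regularizedCost, frob, entropy, cellCost, sum_add_distrib, mul_sum, mul_neg,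
    sub_neg_eq_add]

lemma continuous_regularizedCost (γ : ℝ) (M : Matrix (Fin n) (Fin s) ℝ) :
    Continuous (regularizedCost γ M) := by
  simp only [funext (regularizedCost_eq_sum γ M)]
  exact continuous_finsetSum _ fun i _ ↦ continuous_finsetSum _ fun j _ ↦
    (continuous_cellCost γ (M i j)).comp (by fun_prop)

lemma strictConvexOn_regularizedCost (hγ : 0 < γ) (M : Matrix (Fin n) (Fin s) ℝ) :
    StrictConvexOn ℝ {T | ∀ i j, 0 ≤ T i j} (regularizedCost γ M) := by
  have hsum := strictConvexOn_univ_pi_sum fun i ↦ strictConvexOn_univ_pi_sum fun j ↦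
    strictConvexOn_cellCost hγ (M i j)
  simp only [Set.pi, Set.mem_univ, Set.mem_Ici, Set.mem_ofPred_eq, true_imp_iff] at hsum
  rw [funext (regularizedCost_eq_sum γ M)]
  exact hsum

lemma existsUnique_isMinOn_regularizedCost (hγ : 0 < γ) (M : Matrix (Fin n) (Fin s) ℝ)
    (hne : (transportPolytope p q).Nonempty) :
    ∃! T, T ∈ transportPolytope p q ∧
      IsMinOn (regularizedCost γ M) (transportPolytope p q) T := by
  obtain ⟨T, hT, hmin⟩ := (isCompact_transportPolytope p q).exists_isMinOn hne
    (continuous_regularizedCost γ M).continuousOn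
  have hconv : StrictConvexOn ℝ (transportPolytope p q) (regularizedCost γ M) :=
    (strictConvexOn_regularizedCost hγ M).subset (fun _ h ↦ h.1) (convex_transportPolytope p q)
  exact ⟨T, ⟨hT, hmin⟩, fun S ⟨hS, hSmin⟩ ↦ hconv.eq_of_isMinOn hSmin hmin hS hT⟩

lemma regularizedCost_segment_le (hγ : 0 < γ) (hT : ∀ i j, 0 ≤ T i j) (hP : ∀ i j, 0 ≤ P i j)
    {k : Fin n} {l : Fin s} (hkl : T k l = 0) {t : ℝ} (ht₀ : 0 ≤ t) (ht₁ : t ≤ 1) :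
    regularizedCost γ M ((1 - t) • T + t • P) ≤
      (1 - t) * regularizedCost γ M T + t * regularizedCost γ M P +
        γ * (t * P k l) * Real.log t := by
  let gap (i : Fin n) (j : Fin s) : ℝ :=
    (1 - t) * cellCost γ (M i j) (T i j) + t * cellCost γ (M i j) (P i j) -
      cellCost γ (M i j) ((1 - t) * T i j + t * P i j)
  have hgap (i j) : 0 ≤ gap i j := sub_nonneg.2 <|
    (strictConvexOn_cellCost hγ (M i j)).convexOn.2 (hT i j) (hP i j) (sub_nonneg.2 ht₁) ht₀
      (sub_add_cancel 1 t)
  have hgap_kl : gap k l = -(γ * (t * P k l) * Real.log t) := by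
    have hzero : cellCost γ (M k l) 0 = 0 := by simp [cellCost]
    simp only [gap, hkl, hzero, mul_zero, zero_add, cellCost_mul]
    ring
  have hgap_sum : ∑ i, ∑ j, gap i j =
      (1 - t) * regularizedCost γ M T + t * regularizedCost γ M P -
        regularizedCost γ M ((1 - t) • T + t • P) := by
    simp only [gap, regularizedCost_eq_sum, sum_sub_distrib, sum_add_distrib, mul_sum,
      Matrix.add_apply, Matrix.smul_apply, smul_eq_mul]
  have hle : gap k l ≤ ∑ i, ∑ j, gap i j :=
    (single_le_sum (fun j _ ↦ hgap k j) (mem_univ l)).trans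
      (single_le_sum (f := fun i ↦ ∑ j, gap i j) (fun i _ ↦ sum_nonneg fun j _ ↦ hgap i j)
        (mem_univ k))
  linarith

lemma pos_of_isMinOn_regularizedCost (hγ : 0 < γ) (hT : T ∈ transportPolytope p q)
    (hmin : IsMinOn (regularizedCost γ M) (transportPolytope p q) T)
    (hP : P ∈ transportPolytope p q) {k : Fin n} {l : Fin s} (hPkl : 0 < P k l) : 0 < T k l := by
  refine (hT.1 k l).lt_of_ne' fun hkl ↦ ?_
  have hlog : Tendsto (fun t ↦ γ * P k l * Real.log t) (𝓝[>] 0) atBot :=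
    Real.tendsto_log_nhdsGT_zero.const_mul_atBot (mul_pos hγ hPkl)
  obtain ⟨t, hlt, ht₀, ht₁⟩ :=
    ((hlog.eventually_lt_atBot (regularizedCost γ M T - regularizedCost γ M P)).and
      (Ioo_mem_nhdsGT one_pos)).exists
  have hmem : (1 - t) • T + t • P ∈ transportPolytope p q :=
    convex_transportPolytope p q hT hP (sub_nonneg.2 ht₁.le) ht₀.le (sub_add_cancel 1 t)
  have hle : t * (regularizedCost γ M T - regularizedCost γ M P) ≤
      t * (γ * P k l * Real.log t) := by
    linarith [isMinOn_iff.1 hmin _ hmem,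
      regularizedCost_segment_le (M := M) hγ hT.1 hP.1 hkl ht₀.le ht₁.le]
  exact hlt.not_ge (le_of_mul_le_mul_left hle ht₀)

/-- The gradient of `regularizedCost γ M` at a matrix `T` without zero entries. -/
def costGradient (γ : ℝ) (M T : Matrix (Fin n) (Fin s) ℝ) : Matrix (Fin n) (Fin s) ℝ :=
  of fun i j ↦ M i j + γ * (Real.log (T i j) + 1)

lemma hasDerivAt_regularizedCost_add_smul (γ : ℝ) (M : Matrix (Fin n) (Fin s) ℝ)
    (hT : ∀ i j, T i j ≠ 0) (D : Matrix (Fin n) (Fin s) ℝ) :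
    HasDerivAt (fun t : ℝ ↦ regularizedCost γ M (T + t • D)) (frob D (costGradient γ M T)) 0 := by
  simp only [regularizedCost_eq_sum]
  refine HasDerivAt.fun_sum fun i _ ↦ HasDerivAt.fun_sum fun j _ ↦ ?_
  have hline : HasDerivAt (fun t : ℝ ↦ (T + t • D) i j) (D i j) 0 :=
    (hasDerivAt_mul_const (D i j)).const_add (T i j)
  rw [mul_comm]
  exact (hasDerivAt_cellCost γ (M i j) (hT i j)).comp_of_eq 0 hline (by simp)

lemma frob_costGradient_eq_zero (hT : T ∈ transportPolytope p q) (hpos : ∀ i j, 0 < T i j)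
    (hmin : IsMinOn (regularizedCost γ M) (transportPolytope p q) T)
    {D : Matrix (Fin n) (Fin s) ℝ} (hrow : ∀ i, ∑ j, D i j = 0) (hcol : ∀ j, ∑ i, D i j = 0) :
    frob D (costGradient γ M T) = 0 := by
  have hnonneg : ∀ᶠ t : ℝ in 𝓝 0, ∀ i j, 0 ≤ (T + t • D) i j := by
    refine eventually_all.2 fun i ↦ eventually_all.2 fun j ↦ ?_
    have hcont : Continuous fun t : ℝ ↦ (T + t • D) i j := by fun_prop
    exact (hcont.tendsto' 0 (T i j) (by simp)).eventually (le_mem_nhds (hpos i j))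
  have hloc : IsLocalMin (fun t : ℝ ↦ regularizedCost γ M (T + t • D)) 0 := by
    filter_upwards [hnonneg] with t ht
    have hmem : T + t • D ∈ transportPolytope p q :=
      add_mem_transportPolytope hT (fun i ↦ by simp [← mul_sum, hrow])
        (fun j ↦ by simp [← mul_sum, hcol]) ht
    simpa using isMinOn_iff.1 hmin _ hmem
  exact hloc.hasDerivAt_eq_zero
    (hasDerivAt_regularizedCost_add_smul γ M (fun i j ↦ (hpos i j).ne') D)

lemma frob_vecMulVec (x : Fin n → ℝ) (y : Fin s → ℝ) (A : Matrix (Fin n) (Fin s) ℝ) :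
    frob (vecMulVec x y) A = x ⬝ᵥ A *ᵥ y := by
  simp only [frob, vecMulVec_apply, dotProduct, mulVec, mul_sum]
  exact sum_congr rfl fun i _ ↦ sum_congr rfl fun j _ ↦ by ring

lemma costGradient_exchange (hT : T ∈ transportPolytope p q) (hpos : ∀ i j, 0 < T i j)
    (hmin : IsMinOn (regularizedCost γ M) (transportPolytope p q) T)
    (i i' : Fin n) (j j' : Fin s) :
    costGradient γ M T i j + costGradient γ M T i' j' =
      costGradient γ M T i j' + costGradient γ M T i' j := by
  let x : Fin n → ℝ := Pi.single i 1 - Pi.single i' 1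
  let y : Fin s → ℝ := Pi.single j 1 - Pi.single j' 1
  have hx : ∑ k, x k = 0 := by simp [x]
  have hy : ∑ l, y l = 0 := by simp [y]
  have hzero : frob (vecMulVec x y) (costGradient γ M T) = 0 :=
    frob_costGradient_eq_zero hT hpos hmin
      (fun k ↦ by simp only [vecMulVec_apply, ← mul_sum, hy, mul_zero])
      (fun l ↦ by simp only [vecMulVec_apply, ← sum_mul, hx, zero_mul])
  simp only [frob_vecMulVec, x, y, mulVec_sub, mulVec_single_one, sub_dotProduct, dotProduct_sub,
    single_one_dotProduct, col_apply] at hzero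
  linarith

lemma exists_scaling_of_costGradient_eq_add (hγ : γ ≠ 0) (hpos : ∀ i j, 0 < T i j)
    {a : Fin n → ℝ} {b : Fin s → ℝ} (hab : ∀ i j, costGradient γ M T i j = a i + b j) :
    ∃ (u : Fin n → ℝ) (v : Fin s → ℝ), (∀ i, 0 < u i) ∧ (∀ j, 0 < v j) ∧
      ∀ i j, T i j = u i * Kmat γ M i j * v j := by
  refine ⟨fun i ↦ Real.exp (a i / γ - 1), fun j ↦ Real.exp (b j / γ),
    fun i ↦ Real.exp_pos _, fun j ↦ Real.exp_pos _, fun i j ↦ ?_⟩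
  have hlog : Real.log (T i j) = a i / γ - 1 + -M i j / γ + b j / γ := by
    have hij : M i j + γ * (Real.log (T i j) + 1) = a i + b j := hab i j
    field_simp
    linarith
  rw [Kmat, ← Real.exp_add, ← Real.exp_add, ← hlog, Real.exp_log (hpos i j)]

end RegularizedCost

theorem entropic_minimizer_scaling_form_general {γ : ℝ} (hγ : 0 < γ)
    (M : Matrix (Fin n) (Fin s) ℝ) (hp : ∀ i, 0 < p i) (hq : ∀ j, 0 < q j)
    (hpq : ∑ i, p i = ∑ j, q j) :
    (∃! T, T ∈ transportPolytope p q ∧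
      IsMinOn (regularizedCost γ M) (transportPolytope p q) T) ∧
    ∀ T, T ∈ transportPolytope p q ∧ IsMinOn (regularizedCost γ M) (transportPolytope p q) T →
      ∃ (u : Fin n → ℝ) (v : Fin s → ℝ), (∀ i, 0 < u i) ∧ (∀ j, 0 < v j) ∧
        ∀ i j, T i j = u i * Kmat γ M i j * v j := by
  obtain ⟨P, hP, hPpos⟩ := exists_pos_mem_transportPolytope hp hq hpq
  refine ⟨existsUnique_isMinOn_regularizedCost hγ M ⟨P, hP⟩, fun T ⟨hT, hmin⟩ ↦ ?_⟩
  have hpos (i j) : 0 < T i j := pos_of_isMinOn_regularizedCost hγ hT hmin hP (hPpos i j)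
  obtain ⟨a, b, hab⟩ := exists_eq_add_of_exchange (costGradient_exchange hT hpos hmin)
  exact exists_scaling_of_costGradient_eq_add hγ.ne' hpos hab

end EntropicTransport

/-- for p, q with strictly positive entries, the entropy-regularized
transport problem has a unique minimizer T*, and T* has the scaling form
T*_{ij} = u_i K_{ij} v_j for strictly positive u, v. -/
theorem entropic_minimizer_scaling_form
    (n s : ℕ) (hn : 0 < n) (hs : 0 < s)
    (γ : ℝ) (hγ : 0 < γ)
    (M : Matrix (Fin n) (Fin s) ℝ) (hM : ∀ i j, 0 ≤ M i j)
    (p : Fin n → ℝ) (q : Fin s → ℝ)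
    (hp : p ∈ simplex n) (hq : q ∈ simplex s)
    (hp' : ∀ i, 0 < p i) (hq' : ∀ j, 0 < q j) :
    (∃! T : Matrix (Fin n) (Fin s) ℝ,
      T ∈ transportPolytope p q ∧
      ∀ T' ∈ transportPolytope p q,
        frob T M - γ * entropy T ≤ frob T' M - γ * entropy T') ∧
    ∀ T : Matrix (Fin n) (Fin s) ℝ,
      (T ∈ transportPolytope p q ∧
        ∀ T' ∈ transportPolytope p q,
          frob T M - γ * entropy T ≤ frob T' M - γ * entropy T') →
      ∃ (u : Fin n → ℝ) (v : Fin s → ℝ),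
        (∀ i, 0 < u i) ∧ (∀ j, 0 < v j) ∧
        ∀ i j, T i j = u i * Kmat γ M i j * v j :=
  entropic_minimizer_scaling_form_general hγ M hp' hq' (hp.2.trans hq.2.symm)
end
end
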